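/- arXiv:2410.02213 — 2 statements merged into one kernel-verified Lean document; each statement's English description precedes it below -/
import Mathlib

section
/- With the deformed code construction, assuming G is connected with nonempty vertex set: the rank of the deformed Z-check matrix satisfies rank H'_Z = rank H_Z + |E| − |V| + 1. -/
open Finset

variable {V : Type*} [Fintype V] [DecidableEq V]

/-- The boundary map `∂ : 𝔽₂^E → 𝔽₂^V` of a simple graph, sending the indicator of an edge
to the sum of the indicators of its endpoints. -/
def bd (G : SimpleGraph V) [Fintype G.edgeSet] :
    (G.edgeSet → ZMod 2) →ₗ[ZMod 2] (V → ZMod 2) where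
  toFun x := fun v => ∑ e : G.edgeSet, if v ∈ (e : Sym2 V) then x e else 0
  map_add' x y := by
    funext v
    simp only [Pi.add_apply]
    rw [← Finset.sum_add_distrib]
    exact Finset.sum_congr rfl fun e _ => by split <;> simp
  map_smul' r x := by
    funext v
    simp only [Pi.smul_apply, smul_eq_mul, RingHom.id_apply]
    rw [Finset.mul_sum]
    exact Finset.sum_congr rfl fun e _ => by split <;> simp

/-- The coboundary map `δ : 𝔽₂^V → 𝔽₂^E` of a simple graph (the transpose of `∂`):
`(δ c) e = c u + c v` where `u, v` are the endpoints of `e`. -/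
def cobd (G : SimpleGraph V) [Fintype G.edgeSet] :
    (V → ZMod 2) →ₗ[ZMod 2] (G.edgeSet → ZMod 2) where
  toFun c := fun e => ∑ v : V, if v ∈ (e : Sym2 V) then c v else 0
  map_add' x y := by
    funext e
    simp only [Pi.add_apply]
    rw [← Finset.sum_add_distrib]
    exact Finset.sum_congr rfl fun v _ => by split <;> simp
  map_smul' r x := by
    funext e
    simp only [Pi.smul_apply, smul_eq_mul, RingHom.id_apply]
    rw [Finset.mul_sum]
    exact Finset.sum_congr rfl fun v _ => by split <;> simp

/-- The Gauss's law row `a_v = (1_v, δ 1_v) ∈ 𝔽₂^n × 𝔽₂^E` of the deformed `X`-check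
matrix, for a vertex `v` of the graph `G` on the support of the logical `ℓ`. -/
def gaussRow {n : ℕ} {ℓ : Fin n → ZMod 2} (G : SimpleGraph {i : Fin n // ℓ i = 1})
    [Fintype G.edgeSet] (v : {i : Fin n // ℓ i = 1}) : (Fin n ⊕ G.edgeSet) → ZMod 2 :=
  Sum.elim (fun i => if i = v.1 then 1 else 0) (cobd G (fun w => if w = v then 1 else 0))

/-- The deformed `X`-check matrix `H'_X`: the rows of `H_X` padded with zeros on the edge
coordinates, together with the Gauss's law rows `a_v` for the vertices of `G`. -/
def deformedHX {n : ℕ} {rX : Type*} (HX : Matrix rX (Fin n) (ZMod 2))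
    {ℓ : Fin n → ZMod 2} (G : SimpleGraph {i : Fin n // ℓ i = 1}) [Fintype G.edgeSet] :
    Matrix (rX ⊕ {i : Fin n // ℓ i = 1}) (Fin n ⊕ G.edgeSet) (ZMod 2) :=
  Matrix.of (Sum.elim (fun j => Sum.elim (fun i => HX j i) 0) (fun v => gaussRow G v))

/-- The deformed `Z`-check matrix `H'_Z`: the rows `(z, γ_z)` for the rows `z` of `H_Z`,
together with the cycle rows `(0, p)` for the rows `p` of the cycle-basis matrix `N`. -/
def deformedHZ {n : ℕ} {rZ rN : Type*} (HZ : Matrix rZ (Fin n) (ZMod 2))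
    {ℓ : Fin n → ZMod 2} (G : SimpleGraph {i : Fin n // ℓ i = 1}) [Fintype G.edgeSet]
    (γ : rZ → G.edgeSet → ZMod 2) (N : rN → G.edgeSet → ZMod 2) :
    Matrix (rZ ⊕ rN) (Fin n ⊕ G.edgeSet) (ZMod 2) :=
  Matrix.of (Sum.elim (fun z => Sum.elim (fun i => HZ z i) (γ z)) (fun p => Sum.elim 0 (N p)))

/-!
Project the row space of `H'_Z` onto the original qubits. The image is the row space of `H_Z`. The
kernel consists of the vectors `(0, y)` with `y` a cycle: if a combination of rows `z` vanishes,
then the same combination of the `γ_z` has boundary zero, and the rows of `N` already span the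
cycles. Hence `rank H'_Z = rank H_Z + dim ker ∂`.

The rank of `∂` equals that of its transpose `δ`, whose kernel is the space of functions constant on
each connected component of `G`, so rank-nullity gives `dim ker ∂ = |E| - |V| + c(G)`.
-/

section LinearAlgebra

open Matrix Module

theorem finrank_map_add_finrank_comap_of_exact {K L M P : Type*} [DivisionRing K]
    [AddCommGroup L] [Module K L] [AddCommGroup M] [Module K M] [AddCommGroup P] [Module K P]
    {ι : L →ₗ[K] M} {π : M →ₗ[K] P} (hι : Function.Injective ι) (hexact : Function.Exact ι π)
    (S : Submodule K M) [FiniteDimensional K S] :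
    finrank K (S.map π) + finrank K (S.comap ι) = finrank K S := by
  have hker : finrank K (LinearMap.ker (π.domRestrict S)) = finrank K (S.comap ι) := calc
    finrank K (LinearMap.ker (π.domRestrict S))
      = finrank K ((LinearMap.ker (π.domRestrict S)).map S.subtype) :=
        (Submodule.finrank_map_subtype_eq S _).symm
    _ = finrank K ((S.comap ι).map ι) := by
        rw [LinearMap.ker_domRestrict, Submodule.map_comap_subtype, hexact.linearMap_ker_eq,
          Submodule.map_comap_eq, inf_comm]
    _ = finrank K (S.comap ι) :=
        (LinearEquiv.finrank_eq (Submodule.equivMapOfInjective _ hι _)).symm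
  rw [← hker, ← LinearMap.range_domRestrict]
  exact (π.domRestrict S).finrank_range_add_finrank_ker

variable {K m k n l : Type*} [Field K] [Fintype n] [Fintype l]

theorem rank_eq_finrank_range_vecMulLinear [Fintype m] (A : Matrix m n K) :
    A.rank = finrank K (LinearMap.range A.vecMulLinear) := by
  rw [rank_eq_finrank_span_row, range_vecMulLinear]

theorem rank_fromBlocks_zero₂₁_of_vecMul_mem_range [Fintype m] [Fintype k]
    (A : Matrix m n K) (B : Matrix m l K) (D : Matrix k l K)
    (h : ∀ x, x ᵥ* A = 0 → x ᵥ* B ∈ LinearMap.range D.vecMulLinear) :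
    (fromBlocks A B 0 D).rank = A.rank + D.rank := by
  let split := LinearEquiv.sumArrowLequivProdArrow n l K K
  let S := (LinearMap.range (fromBlocks A B 0 D).vecMulLinear).map split.toLinearMap
  have mem_S {u : n → K} {w : l → K} :
      (u, w) ∈ S ↔ ∃ x y, x ᵥ* A = u ∧ x ᵥ* B + y ᵥ* D = w := by
    have split_vecMul (c : m ⊕ k → K) : split (c ᵥ* fromBlocks A B 0 D) =
        ((c ∘ Sum.inl) ᵥ* A, (c ∘ Sum.inl) ᵥ* B + (c ∘ Sum.inr) ᵥ* D) := by
      rw [vecMul_fromBlocks, vecMul_zero, add_zero]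
      rfl
    constructor
    · rintro ⟨_, ⟨c, rfl⟩, hc⟩
      exact ⟨c ∘ Sum.inl, c ∘ Sum.inr, Prod.mk.inj ((split_vecMul c).symm.trans hc)⟩
    · rintro ⟨x, y, rfl, rfl⟩
      exact ⟨_, ⟨Sum.elim x y, rfl⟩, split_vecMul _⟩
  have map_fst : S.map (LinearMap.fst K _ _) = LinearMap.range A.vecMulLinear := by
    ext u
    simp [mem_S]
  have comap_inr : S.comap (LinearMap.inr K _ _) = LinearMap.range D.vecMulLinear := by
    ext w
    simp only [Submodule.mem_comap, LinearMap.inr_apply, mem_S]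
    constructor
    · rintro ⟨x, y, hxA, rfl⟩
      exact add_mem (h x hxA) ⟨y, rfl⟩
    · rintro ⟨y, rfl⟩
      exact ⟨0, y, by simp⟩
  rw [rank_eq_finrank_range_vecMulLinear A, rank_eq_finrank_range_vecMulLinear D, ← map_fst,
    ← comap_inr, finrank_map_add_finrank_comap_of_exact LinearMap.inr_injective .inr_fst,
    rank_eq_finrank_range_vecMulLinear, LinearEquiv.finrank_map_eq]

theorem rank_fromBlocks_zero₂₁_of_span_eq_ker [Finite m] [Finite k]
    {P : Type*} [AddCommGroup P] [Module K P]
    (A : Matrix m n K) (B : Matrix m l K) (D : Matrix k l K)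
    (φ : (l → K) →ₗ[K] P) (ρ : (n → K) →ₗ[K] P) (hB : ∀ i, φ (B i) = ρ (A i))
    (hD : Submodule.span K (Set.range D) = LinearMap.ker φ) :
    (fromBlocks A B 0 D).rank = A.rank + finrank K (LinearMap.ker φ) := by
  cases nonempty_fintype m
  cases nonempty_fintype k
  have map_vecMul (x : m → K) : φ (x ᵥ* B) = ρ (x ᵥ* A) := by
    simp only [vecMul_eq_sum, map_sum, map_smul, hB]
  have range_D : LinearMap.range D.vecMulLinear = LinearMap.ker φ :=
    (range_vecMulLinear D).trans hD
  rw [rank_fromBlocks_zero₂₁_of_vecMul_mem_range, rank_eq_finrank_range_vecMulLinear D, range_D]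
  intro x hx
  rw [range_D, LinearMap.mem_ker, map_vecMul, hx, map_zero]

end LinearAlgebra

section CycleSpace

open Module

variable {G : SimpleGraph V} [Fintype G.edgeSet]

theorem cobd_apply_mk (c : V → ZMod 2) {u v : V} (h : G.Adj u v) :
    cobd G c ⟨s(u, v), h⟩ = c u + c v := by
  have endpoints : ({w | w ∈ s(u, v)} : Finset V) = {u, v} := by ext; simp
  calc cobd G c ⟨s(u, v), h⟩ = ∑ w with w ∈ s(u, v), c w := (sum_filter _ _).symm
    _ = c u + c v := by rw [endpoints, sum_pair h.ne]

theorem cobd_eq_zero_iff_forall_adj {c : V → ZMod 2} :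
    cobd G c = 0 ↔ ∀ u v, G.Adj u v → c u = c v := by
  constructor
  · intro hc u v h
    rw [← CharTwo.add_eq_zero, ← cobd_apply_mk c h, hc, Pi.zero_apply]
  · intro hc
    ext ⟨e, he⟩
    induction e with
    | h u v => rw [cobd_apply_mk c he, hc u v he, CharTwo.add_self_eq_zero, Pi.zero_apply]

variable (G)

theorem ker_cobd : LinearMap.ker (cobd G) =
    LinearMap.range (LinearMap.funLeft (ZMod 2) (ZMod 2) G.connectedComponentMk) := by
  ext c
  rw [LinearMap.mem_ker, cobd_eq_zero_iff_forall_adj]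
  constructor
  · intro hc
    have hpath (u v : V) (p : G.Walk u v) : c u = c v := by
      induction p with
      | nil => rfl
      | cons h _ ih => exact (hc _ _ h).trans ih
    exact ⟨SimpleGraph.ConnectedComponent.lift c fun u v p _ => hpath u v p, rfl⟩
  · rintro ⟨d, rfl⟩ u v h
    exact congrArg d (SimpleGraph.ConnectedComponent.sound h.reachable)

theorem finrank_ker_cobd :
    finrank (ZMod 2) (LinearMap.ker (cobd G)) = Nat.card G.ConnectedComponent := by
  classical
  have hsurj : Function.Surjective G.connectedComponentMk := Quot.mk_surjective
  rw [ker_cobd, LinearMap.finrank_range_of_inj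
    (LinearMap.funLeft_injective_of_surjective _ _ _ hsurj),
    finrank_fintype_fun_eq_card, Nat.card_eq_fintype_card]

theorem toMatrix'_bd : LinearMap.toMatrix' (bd G) = (LinearMap.toMatrix' (cobd G)).transpose := by
  ext v e
  simp only [Matrix.transpose_apply, LinearMap.toMatrix'_apply, bd, cobd, LinearMap.coe_mk,
    AddHom.coe_mk]
  rw [Fintype.sum_eq_single e, Fintype.sum_eq_single v] <;> simp +contextual

theorem finrank_range_bd_eq_finrank_range_cobd :
    finrank (ZMod 2) (LinearMap.range (bd G)) = finrank (ZMod 2) (LinearMap.range (cobd G)) := by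
  rw [← Matrix.toLin'_toMatrix' (bd G), ← Matrix.toLin'_toMatrix' (cobd G), toMatrix'_bd]
  exact Matrix.rank_transpose _

theorem finrank_ker_bd_add_card :
    finrank (ZMod 2) (LinearMap.ker (bd G)) + Fintype.card V =
      Fintype.card G.edgeSet + Nat.card G.ConnectedComponent := by
  have hbd := (bd G).finrank_range_add_finrank_ker
  have hcobd := (cobd G).finrank_range_add_finrank_ker
  rw [finrank_fintype_fun_eq_card] at hbd hcobd
  rw [finrank_ker_cobd] at hcobd
  have := finrank_range_bd_eq_finrank_range_cobd G
  lia

theorem card_connectedComponent_eq_one {U : Type*} {G : SimpleGraph U} (hG : G.Connected) :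
    Nat.card G.ConnectedComponent = 1 :=
  have := hG.nonempty
  Nat.card_eq_one_iff_unique.2 ⟨hG.preconnected.subsingleton_connectedComponent, inferInstance⟩

end CycleSpace

theorem deformedHZ_eq_fromBlocks {n : ℕ} {rZ rN : Type*} (HZ : Matrix rZ (Fin n) (ZMod 2))
    {ℓ : Fin n → ZMod 2} (G : SimpleGraph {i : Fin n // ℓ i = 1}) [Fintype G.edgeSet]
    (γ : rZ → G.edgeSet → ZMod 2) (N : rN → G.edgeSet → ZMod 2) :
    deformedHZ HZ G γ N = Matrix.fromBlocks HZ (.of γ) 0 (.of N) := by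
  ext (z | p) (i | e) <;> rfl

theorem deformed_HZ_rank_general {n : ℕ} {rZ rN : Type*} [Finite rZ] [Finite rN]
    (HZ : Matrix rZ (Fin n) (ZMod 2)) {ℓ : Fin n → ZMod 2}
    (G : SimpleGraph {i : Fin n // ℓ i = 1}) [Fintype G.edgeSet]
    (γ : rZ → G.edgeSet → ZMod 2) (hγ : ∀ z, bd G (γ z) = fun v => HZ z v.1)
    (N : rN → G.edgeSet → ZMod 2)
    (hN : Submodule.span (ZMod 2) (Set.range N) = LinearMap.ker (bd G)) :
    (deformedHZ HZ G γ N).rank + Fintype.card {i : Fin n // ℓ i = 1} =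
      HZ.rank + Fintype.card G.edgeSet + Nat.card G.ConnectedComponent := by
  let restrict := LinearMap.funLeft (ZMod 2) (ZMod 2) (Subtype.val : {i // ℓ i = 1} → Fin n)
  rw [deformedHZ_eq_fromBlocks,
    rank_fromBlocks_zero₂₁_of_span_eq_ker HZ (.of γ) (.of N) (bd G) restrict hγ hN,
    add_assoc, add_assoc, finrank_ker_bd_add_card]

/-- For a connected graph `G` with nonempty vertex set, the rank of the
deformed `Z`-check matrix satisfies `rank H'_Z = rank H_Z + |E| − |V| + 1`; stated
additively: `rank H'_Z + |V| = rank H_Z + |E| + 1`. -/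
theorem deformed_HZ_rank {n : ℕ} {rX rZ rN : Type*}
    [Fintype rX] [Fintype rZ] [Fintype rN]
    (HX : Matrix rX (Fin n) (ZMod 2)) (HZ : Matrix rZ (Fin n) (ZMod 2))
    (hCSS : HX * HZ.transpose = 0)
    (ℓ : Fin n → ZMod 2) (hℓZ : HZ.mulVec ℓ = 0)
    (hℓX : ℓ ∉ LinearMap.range HX.vecMulLinear)
    (G : SimpleGraph {i : Fin n // ℓ i = 1}) [Fintype G.edgeSet] (hG : G.Connected)
    (γ : rZ → G.edgeSet → ZMod 2)
    (hγ : ∀ z : rZ, bd G (γ z) = fun v => HZ z v.1)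
    (N : rN → G.edgeSet → ZMod 2)
    (hN0 : ∀ p : rN, bd G (N p) = 0)
    (hNli : LinearIndependent (ZMod 2) N)
    (hNspan : ∀ y : G.edgeSet → ZMod 2, bd G y = 0 →
      y ∈ Submodule.span (ZMod 2) (Set.range N)) :
    (deformedHZ HZ G γ N).rank + Fintype.card {i : Fin n // ℓ i = 1}
      = HZ.rank + Fintype.card G.edgeSet + 1 := by
  have hN : Submodule.span (ZMod 2) (Set.range N) = LinearMap.ker (bd G) :=
    le_antisymm (Submodule.span_le.2 (Set.range_subset_iff.2 hN0)) hNspan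
  rw [deformed_HZ_rank_general HZ G γ hγ N hN, card_connectedComponent_eq_one hG]
end

section
/- Cleaning lemma for X-type logicals of the deformed code: with the deformed code construction, for every x' ∈ 𝔽₂^{n+|E|} with H'_Z x' = 0 there exists c ∈ 𝔽₂^V such that the vector x' + Σ_{v : c(v)=1} a_v has zero E-component, its 𝔽₂^n-component x satisfies H_Z x = 0, and x' lies in the row space of H'_X if and only if x lies in the sum of the row space of H_X and the span of ℓ. In particular, every X-type logical operator of the deformed code is equivalent, modulo deformed X-stabilizers, to an operator supported only on the original qubits whose restriction is a nontrivial X-type logical operator of the original code. -/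
open Finset

variable {V : Type*} [Fintype V] [DecidableEq V]

/-!
Since `δ` is the transpose of `∂`, the range of `δ` is the orthogonal complement of the cycle
space. The cycle checks therefore force the edge component of `x'` to be a coboundary `δ c`, and
adding the Gauss rows selected by `c` clears it. These rows are orthogonal to every `(z, γ_z)`, so
the cleaned vector `(x, 0)` still passes the deformed `Z`-checks, which on such vectors are the
checks of `H_Z`. Finally, a combination of rows of `H'_X` has zero edge component exactly when its
Gauss coefficients lie in `ker δ`, which on a connected graph consists of the constants; the sum
of all Gauss rows is `(ℓ, 0)`.
-/

open Matrix

theorem mem_range_of_dotProduct_ker_eq_zero {K m n : Type*} [Field K] [Fintype m] [Fintype n]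
    {f : (m → K) →ₗ[K] n → K} {g : (n → K) →ₗ[K] m → K}
    (hfg : ∀ y c, f y ⬝ᵥ c = y ⬝ᵥ g c) {y : m → K} (hy : ∀ p ∈ LinearMap.ker f, p ⬝ᵥ y = 0) :
    y ∈ LinearMap.range g := by
  classical
  have hy_dual : dotProductEquiv K m y ∈ LinearMap.range f.dualMap := by
    rw [LinearMap.range_dualMap_eq_dualAnnihilator_ker, Submodule.mem_dualAnnihilator]
    intro p hp
    rw [dotProductEquiv_apply_apply, dotProduct_comm, hy p hp]
  obtain ⟨φ, hφ⟩ := hy_dual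
  obtain ⟨c, rfl⟩ := (dotProductEquiv K n).surjective φ
  refine ⟨c, dotProduct_eq _ _ fun p => ?_⟩
  calc g c ⬝ᵥ p = c ⬝ᵥ f p := by rw [dotProduct_comm, ← hfg, dotProduct_comm]
    _ = y ⬝ᵥ p := LinearMap.congr_fun hφ p

theorem dotProduct_eq_zero_of_mem_span {R κ m : Type*} [Semiring R] [Fintype m]
    {N : κ → m → R} {y p : m → R} (hy : ∀ k, N k ⬝ᵥ y = 0)
    (hp : p ∈ Submodule.span R (Set.range N)) : p ⬝ᵥ y = 0 := by
  induction hp using Submodule.span_induction with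
  | mem _ hq => obtain ⟨k, rfl⟩ := hq; exact hy k
  | zero => exact zero_dotProduct y
  | add a b _ _ ha hb => rw [add_dotProduct, ha, hb, add_zero]
  | smul r a _ ha => rw [smul_dotProduct, ha, smul_zero]

theorem dotProduct_extend_zero {R ι κ : Type*} [NonUnitalNonAssocSemiring R] [Fintype ι]
    [Fintype κ] {f : ι → κ} (hf : Function.Injective f) (z : κ → R) (c : ι → R) :
    z ⬝ᵥ Function.extend f c 0 = (z ∘ f) ⬝ᵥ c := by
  refine (Fintype.sum_of_injective f hf _ _ (fun i hi => ?_) fun v => ?_).symm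
  · rw [Function.extend_apply' _ _ _ hi, Pi.zero_apply, mul_zero]
  · rw [hf.extend_apply, Function.comp_apply]

section Graph

variable (G : SimpleGraph V) [Fintype G.edgeSet]

theorem bd_dotProduct (y : G.edgeSet → ZMod 2) (c : V → ZMod 2) :
    bd G y ⬝ᵥ c = y ⬝ᵥ cobd G c := by
  simp only [dotProduct, bd, cobd, LinearMap.coe_mk, AddHom.coe_mk, Finset.sum_mul,
    Finset.mul_sum, ite_mul, mul_ite, zero_mul, mul_zero]
  exact Finset.sum_comm

variable {G}

theorem cobd_apply_of_adj (c : V → ZMod 2) {u w : V} (h : G.Adj u w) :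
    cobd G c ⟨s(u, w), h⟩ = c u + c w := by
  have endpoints : (univ.filter fun v => v = u ∨ v = w) = {u, w} := by
    ext; simp
  simp only [cobd, LinearMap.coe_mk, AddHom.coe_mk, Sym2.mem_iff]
  rw [← Finset.sum_filter, endpoints, Finset.sum_pair h.ne]

theorem cobd_eq_zero_iff {c : V → ZMod 2} : cobd G c = 0 ↔ ∀ u w, G.Adj u w → c u = c w := by
  refine ⟨fun hc u w h => ?_, fun hc => ?_⟩
  · rw [← CharTwo.add_eq_zero, ← cobd_apply_of_adj c h, hc, Pi.zero_apply]
  · funext ⟨e, he⟩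
    induction e with
    | _ u w => rw [cobd_apply_of_adj c he, hc u w he, CharTwo.add_self_eq_zero, Pi.zero_apply]

theorem ker_cobd_of_preconnected (hG : G.Preconnected) :
    LinearMap.ker (cobd G) = Submodule.span (ZMod 2) {1} := by
  refine le_antisymm (fun c hc => ?_) ?_
  · have c_const (u w : V) : c u = c w := by
      obtain ⟨p⟩ := hG u w
      induction p with
      | nil => rfl
      | cons h _ ih => exact (cobd_eq_zero_iff.1 hc _ _ h).trans ih
    rw [Submodule.mem_span_singleton]
    obtain hV | ⟨⟨v⟩⟩ := isEmpty_or_nonempty V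
    · exact ⟨0, Subsingleton.elim _ _⟩
    · exact ⟨c v, funext fun w => by rw [Pi.smul_apply, Pi.one_apply, smul_eq_mul, mul_one,
        c_const v w]⟩
  · rw [Submodule.span_singleton_le_iff_mem, LinearMap.mem_ker, cobd_eq_zero_iff]
    exact fun _ _ _ => rfl

theorem mem_range_cobd_of_dotProduct_eq_zero {κ : Type*} {N : κ → G.edgeSet → ZMod 2}
    (hN : LinearMap.ker (bd G) ≤ Submodule.span (ZMod 2) (Set.range N))
    {y : G.edgeSet → ZMod 2} (hy : ∀ k, N k ⬝ᵥ y = 0) : y ∈ LinearMap.range (cobd G) :=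
  mem_range_of_dotProduct_ker_eq_zero (bd_dotProduct G) fun _ hp =>
    dotProduct_eq_zero_of_mem_span hy (hN hp)

end Graph

theorem zmod_two_eq_zero_of_ne_one {a : ZMod 2} (ha : a ≠ 1) : a = 0 :=
  not_imp_comm.1 (Fin.eq_one_of_ne_zero a) ha

section ExtendSupport

variable {ι : Type*} {ℓ : ι → ZMod 2}

/-- Extension by zero `𝔽₂^V → 𝔽₂^ι`, where `V` is the support of `ℓ`, encoded as the subtype
`{i // ℓ i = 1}`; it gives the qubit component of a combination of Gauss rows. -/
noncomputable def extendSupport (ℓ : ι → ZMod 2) :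
    ({i // ℓ i = 1} → ZMod 2) →ₗ[ZMod 2] ι → ZMod 2 :=
  Function.ExtendByZero.linearMap (ZMod 2) Subtype.val

theorem extendSupport_apply_coe (c : {i // ℓ i = 1} → ZMod 2) (v : {i // ℓ i = 1}) :
    extendSupport ℓ c v = c v :=
  Subtype.val_injective.extend_apply c (0 : ι → ZMod 2) v

theorem extendSupport_apply_of_ne_one (c : {i // ℓ i = 1} → ZMod 2) {i : ι} (hi : ℓ i ≠ 1) :
    extendSupport ℓ c i = 0 :=
  Function.extend_apply' c (0 : ι → ZMod 2) i fun ⟨v, hv⟩ => hi (hv ▸ v.2)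

theorem extendSupport_one (ℓ : ι → ZMod 2) : extendSupport ℓ 1 = ℓ := by
  funext i
  by_cases hi : ℓ i = 1
  · exact (extendSupport_apply_coe _ ⟨i, hi⟩).trans hi.symm
  · rw [extendSupport_apply_of_ne_one 1 hi, zmod_two_eq_zero_of_ne_one hi]

theorem extendSupport_single [DecidableEq ι] (v : {i // ℓ i = 1}) :
    extendSupport ℓ (Pi.single v 1) = Pi.single v.1 1 := by
  funext i
  by_cases hi : ℓ i = 1
  · refine (extendSupport_apply_coe _ ⟨i, hi⟩).trans ?_
    simp only [Pi.single_apply, Subtype.ext_iff]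
  · have hiv : i ≠ v.1 := fun h => hi (h ▸ v.2)
    rw [extendSupport_apply_of_ne_one _ hi, Pi.single_eq_of_ne hiv]

end ExtendSupport

section DeformedCode

variable {n : ℕ} {ℓ : Fin n → ZMod 2} (G : SimpleGraph {i : Fin n // ℓ i = 1})
  [Fintype G.edgeSet]

/-- The map `c ↦ Σ_v c(v) a_v` combining Gauss rows, given in closed form by its two
components. -/
noncomputable def gaussMap :
    ({i : Fin n // ℓ i = 1} → ZMod 2) →ₗ[ZMod 2] (Fin n ⊕ G.edgeSet) → ZMod 2 :=
  (LinearEquiv.sumArrowLequivProdArrow (Fin n) G.edgeSet (ZMod 2) (ZMod 2)).symm.toLinearMap ∘ₗ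
    (extendSupport ℓ).prod (cobd G)

theorem gaussMap_apply (c : {i : Fin n // ℓ i = 1} → ZMod 2) :
    gaussMap G c = Sum.elim (extendSupport ℓ c) (cobd G c) :=
  rfl

theorem gaussRow_eq_gaussMap_single (v : {i : Fin n // ℓ i = 1}) :
    gaussRow G v = gaussMap G (Pi.single v 1) := by
  have vertex : (fun w => if w = v then (1 : ZMod 2) else 0) = Pi.single v 1 := by
    funext w; rw [Pi.single_apply]
  have qubit : (fun i => if i = v.1 then (1 : ZMod 2) else 0) = Pi.single v.1 1 := by
    funext w; rw [Pi.single_apply]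
  rw [gaussRow, gaussMap_apply, extendSupport_single, vertex, qubit]

theorem sum_smul_gaussRow (c : {i : Fin n // ℓ i = 1} → ZMod 2) :
    ∑ v, c v • gaussRow G v = gaussMap G c := by
  simp only [gaussRow_eq_gaussMap_single, ← map_smul, ← map_sum]
  rw [← pi_eq_sum_univ' c]

theorem sum_filter_gaussRow (c : {i : Fin n // ℓ i = 1} → ZMod 2) :
    ∑ v ∈ Finset.univ.filter (fun v => c v = 1), gaussRow G v = gaussMap G c := by
  rw [← sum_smul_gaussRow, Finset.sum_filter]
  refine Finset.sum_congr rfl fun v _ => ?_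
  split_ifs with hv
  · rw [hv, one_smul]
  · rw [zmod_two_eq_zero_of_ne_one hv, zero_smul]

variable {G} in
theorem sumElim_dotProduct_gaussMap {z : Fin n → ZMod 2} {y : G.edgeSet → ZMod 2}
    (hy : bd G y = fun v => z v.1) (c : {i : Fin n // ℓ i = 1} → ZMod 2) :
    Sum.elim z y ⬝ᵥ gaussMap G c = 0 := by
  have qubit_part : z ⬝ᵥ extendSupport ℓ c = bd G y ⬝ᵥ c := by
    rw [hy]
    exact dotProduct_extend_zero Subtype.val_injective z c
  rw [gaussMap_apply, sumElim_dotProduct_sumElim, qubit_part, bd_dotProduct,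
    CharTwo.add_self_eq_zero]

variable {rX : Type*} [Fintype rX] (HX : Matrix rX (Fin n) (ZMod 2))

theorem sumElim_vecMul_deformedHX (u : rX → ZMod 2) (d : {i : Fin n // ℓ i = 1} → ZMod 2) :
    Sum.elim u d ᵥ* deformedHX HX G = Sum.elim (u ᵥ* HX) 0 + gaussMap G d := by
  have rows : deformedHX HX G = fromRows (fromCols HX 0) (of (gaussRow G)) := by
    ext (_ | _) (_ | _) <;> rfl
  rw [rows, sumElim_vecMul_fromRows, vecMul_fromCols, vecMul_zero, vecMul_eq_sum d,
    ← sum_smul_gaussRow]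
  rfl

theorem gaussMap_mem_range_deformedHX (c : {i : Fin n // ℓ i = 1} → ZMod 2) :
    gaussMap G c ∈ LinearMap.range (deformedHX HX G).vecMulLinear :=
  ⟨Sum.elim 0 c, by
    rw [vecMulLinear_apply, sumElim_vecMul_deformedHX, zero_vecMul, Sum.elim_zero_zero, zero_add]⟩

theorem sumElim_zero_mem_range_deformedHX_iff (x : Fin n → ZMod 2) :
    Sum.elim x 0 ∈ LinearMap.range (deformedHX HX G).vecMulLinear ↔
      x ∈ LinearMap.range HX.vecMulLinear ⊔ (LinearMap.ker (cobd G)).map (extendSupport ℓ) := by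
  have row_combination (u : rX → ZMod 2) (d : {i : Fin n // ℓ i = 1} → ZMod 2) :
      Sum.elim u d ᵥ* deformedHX HX G = Sum.elim (u ᵥ* HX + extendSupport ℓ d) (cobd G d) := by
    rw [sumElim_vecMul_deformedHX, gaussMap_apply, ← Sum.elim_add_add, zero_add]
  constructor
  · rintro ⟨ud, hud⟩
    rw [vecMulLinear_apply, ← Sum.elim_comp_inl_inr ud, row_combination, Sum.elim_eq_iff] at hud
    exact Submodule.mem_sup.2 ⟨_, ⟨_, rfl⟩, _, ⟨_, hud.2, rfl⟩, hud.1⟩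
  · intro hx
    obtain ⟨_, ⟨u, rfl⟩, _, ⟨d, hd, rfl⟩, rfl⟩ := Submodule.mem_sup.1 hx
    refine ⟨Sum.elim u d, ?_⟩
    rw [vecMulLinear_apply, row_combination, LinearMap.mem_ker.1 hd, vecMulLinear_apply]

variable {G} in
theorem map_extendSupport_ker_cobd (hG : G.Preconnected) :
    (LinearMap.ker (cobd G)).map (extendSupport ℓ) = Submodule.span (ZMod 2) {ℓ} := by
  rw [ker_cobd_of_preconnected hG, Submodule.map_span, Set.image_singleton, extendSupport_one]

variable {G HX} in
theorem mem_range_deformedHX_iff_of_add_gaussMap_eq (hG : G.Preconnected)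
    {x' : (Fin n ⊕ G.edgeSet) → ZMod 2} {c : {i : Fin n // ℓ i = 1} → ZMod 2}
    {x : Fin n → ZMod 2} (hx : x' + gaussMap G c = Sum.elim x 0) :
    x' ∈ LinearMap.range (deformedHX HX G).vecMulLinear ↔
      x ∈ LinearMap.range HX.vecMulLinear ⊔ Submodule.span (ZMod 2) {ℓ} := by
  rw [← map_extendSupport_ker_cobd hG, ← sumElim_zero_mem_range_deformedHX_iff, ← hx,
    Submodule.add_mem_iff_left _ (gaussMap_mem_range_deformedHX G HX c)]

variable {rZ rN : Type*} {HZ : Matrix rZ (Fin n) (ZMod 2)} {G} {γ : rZ → G.edgeSet → ZMod 2}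
  {N : rN → G.edgeSet → ZMod 2} {x' : (Fin n ⊕ G.edgeSet) → ZMod 2}

theorem deformedHZ_mulVec_eq_zero_iff :
    deformedHZ HZ G γ N *ᵥ x' = 0 ↔
      (∀ z, Sum.elim (HZ z) (γ z) ⬝ᵥ x' = 0) ∧ ∀ k, N k ⬝ᵥ (x' ∘ Sum.inr) = 0 := by
  have cycle_row (k : rN) :
      Sum.elim (0 : Fin n → ZMod 2) (N k) ⬝ᵥ x' = N k ⬝ᵥ (x' ∘ Sum.inr) := by
    rw [← Sum.elim_comp_inl_inr x', sumElim_dotProduct_sumElim, zero_dotProduct, zero_add,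
      Sum.elim_comp_inr]
  simp only [← cycle_row, funext_iff, Sum.forall]
  rfl

theorem exists_add_gaussMap_eq_sumElim_zero
    (hN : LinearMap.ker (bd G) ≤ Submodule.span (ZMod 2) (Set.range N))
    (hx' : deformedHZ HZ G γ N *ᵥ x' = 0) :
    ∃ c, ∃ x : Fin n → ZMod 2, x' + gaussMap G c = Sum.elim x 0 := by
  obtain ⟨c, hc⟩ :=
    mem_range_cobd_of_dotProduct_eq_zero hN (deformedHZ_mulVec_eq_zero_iff.1 hx').2
  refine ⟨c, x' ∘ Sum.inl + extendSupport ℓ c, ?_⟩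
  calc x' + gaussMap G c
      = Sum.elim (x' ∘ Sum.inl) (x' ∘ Sum.inr) + Sum.elim (extendSupport ℓ c) (cobd G c) := by
        rw [Sum.elim_comp_inl_inr, gaussMap_apply]
    _ = Sum.elim (x' ∘ Sum.inl + extendSupport ℓ c) 0 := by
        rw [← Sum.elim_add_add, hc, ZModModule.add_self]

theorem mulVec_eq_zero_of_add_gaussMap_eq (hγ : ∀ z, bd G (γ z) = fun v => HZ z v.1)
    (hx' : deformedHZ HZ G γ N *ᵥ x' = 0) {c : {i : Fin n // ℓ i = 1} → ZMod 2}
    {x : Fin n → ZMod 2} (hx : x' + gaussMap G c = Sum.elim x 0) : HZ *ᵥ x = 0 := by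
  funext z
  calc HZ z ⬝ᵥ x = Sum.elim (HZ z) (γ z) ⬝ᵥ Sum.elim x 0 := by
        rw [sumElim_dotProduct_sumElim, dotProduct_zero, add_zero]
    _ = Sum.elim (HZ z) (γ z) ⬝ᵥ x' + Sum.elim (HZ z) (γ z) ⬝ᵥ gaussMap G c := by
        rw [← hx, dotProduct_add]
    _ = 0 := by
        rw [(deformedHZ_mulVec_eq_zero_iff.1 hx').1 z, sumElim_dotProduct_gaussMap (hγ z), add_zero]

end DeformedCode

theorem deformed_X_logical_cleaning_general {n : ℕ} {rX rZ rN : Type*} [Fintype rX]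
    (HX : Matrix rX (Fin n) (ZMod 2)) (HZ : Matrix rZ (Fin n) (ZMod 2))
    (ℓ : Fin n → ZMod 2)
    (G : SimpleGraph {i : Fin n // ℓ i = 1}) [Fintype G.edgeSet] (hG : G.Preconnected)
    (γ : rZ → G.edgeSet → ZMod 2)
    (hγ : ∀ z : rZ, bd G (γ z) = fun v => HZ z v.1)
    (N : rN → G.edgeSet → ZMod 2)
    (hN : LinearMap.ker (bd G) ≤ Submodule.span (ZMod 2) (Set.range N))
    (x' : (Fin n ⊕ G.edgeSet) → ZMod 2) (hx' : (deformedHZ HZ G γ N).mulVec x' = 0) :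
    ∃ c : {i : Fin n // ℓ i = 1} → ZMod 2,
      (∀ e : G.edgeSet,
        (x' + ∑ v ∈ Finset.univ.filter (fun v => c v = 1), gaussRow G v) (Sum.inr e) = 0) ∧
      HZ.mulVec (fun i =>
        (x' + ∑ v ∈ Finset.univ.filter (fun v => c v = 1), gaussRow G v) (Sum.inl i)) = 0 ∧
      (x' ∈ LinearMap.range (deformedHX HX G).vecMulLinear ↔
        (fun i =>
          (x' + ∑ v ∈ Finset.univ.filter (fun v => c v = 1), gaussRow G v) (Sum.inl i))
          ∈ LinearMap.range HX.vecMulLinear ⊔ Submodule.span (ZMod 2) {ℓ}) := by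
  obtain ⟨c, x, hx⟩ := exists_add_gaussMap_eq_sumElim_zero hN hx'
  refine ⟨c, ?_⟩
  simp only [sum_filter_gaussRow, hx, Sum.elim_inl, Sum.elim_inr]
  exact ⟨fun _ => rfl, mulVec_eq_zero_of_add_gaussMap_eq hγ hx' hx,
    mem_range_deformedHX_iff_of_add_gaussMap_eq hG hx⟩

/-- **Cleaning lemma for X-type logicals.** Every `x'` with `H'_Z x' = 0`
can be cleaned by adding Gauss rows `Σ_{v : c v = 1} a_v` so that the resulting vector has
zero edge component, its `𝔽₂^n`-component `x` satisfies `H_Z x = 0`, and `x'` is a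
deformed `X`-stabilizer iff `x` lies in the row space of `H_X` plus the span of `ℓ`. -/
theorem deformed_X_logical_cleaning {n : ℕ} {rX rZ rN : Type*}
    [Fintype rX] [Fintype rZ] [Fintype rN]
    (HX : Matrix rX (Fin n) (ZMod 2)) (HZ : Matrix rZ (Fin n) (ZMod 2))
    (hCSS : HX * HZ.transpose = 0)
    (ℓ : Fin n → ZMod 2) (hℓZ : HZ.mulVec ℓ = 0)
    (hℓX : ℓ ∉ LinearMap.range HX.vecMulLinear)
    (G : SimpleGraph {i : Fin n // ℓ i = 1}) [Fintype G.edgeSet] (hG : G.Connected)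
    (γ : rZ → G.edgeSet → ZMod 2)
    (hγ : ∀ z : rZ, bd G (γ z) = fun v => HZ z v.1)
    (N : rN → G.edgeSet → ZMod 2)
    (hN0 : ∀ p : rN, bd G (N p) = 0)
    (hNli : LinearIndependent (ZMod 2) N)
    (hNspan : ∀ y : G.edgeSet → ZMod 2, bd G y = 0 →
      y ∈ Submodule.span (ZMod 2) (Set.range N)) :
    ∀ x' : (Fin n ⊕ G.edgeSet) → ZMod 2, (deformedHZ HZ G γ N).mulVec x' = 0 →
      ∃ c : {i : Fin n // ℓ i = 1} → ZMod 2,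
        (∀ e : G.edgeSet,
          (x' + ∑ v ∈ Finset.univ.filter (fun v => c v = 1), gaussRow G v) (Sum.inr e)
            = 0) ∧
        HZ.mulVec (fun i =>
          (x' + ∑ v ∈ Finset.univ.filter (fun v => c v = 1), gaussRow G v) (Sum.inl i))
            = 0 ∧
        (x' ∈ LinearMap.range (deformedHX HX G).vecMulLinear ↔
          (fun i =>
            (x' + ∑ v ∈ Finset.univ.filter (fun v => c v = 1), gaussRow G v) (Sum.inl i))
            ∈ LinearMap.range HX.vecMulLinear ⊔ Submodule.span (ZMod 2) {ℓ}) :=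
  deformed_X_logical_cleaning_general HX HZ ℓ G hG.preconnected γ hγ N hNspan
end
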